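/- Let A ∈ ℝ^{d₁×⋯×dₙ} be a tensor with Tucker ranks (r₁,…,rₙ). For each mode i, let I_i ⊆ [d_i] be an index set and let J_i = ⊗_{j≠i} I_j be the corresponding product index set into ∏_{j≠i} d_j. Define R = A[I₁,…,Iₙ] (the subtensor of A restricted to the sampled indices in every mode), C_i = (A_(i))[:,J_i] (the columns of the mode-i unfolding of A indexed by J_i), and U_i = (C_i)[I_i,:] (the rows of C_i indexed by I_i). Then the following three conditions are equivalent: (1) A = R ×_{i=1}^n (C_i U_i†); (2) rank(U_i) = r_i for all i ∈ [n]; (3) rank(C_i) = r_i for all i ∈ [n] and R has Tucker rank (r₁,…,rₙ). -/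

import Mathlib

open scoped Matrix

/-- The mode-`k` unfolding of a tensor. -/
noncomputable def unfold {n : ℕ} {κ : Fin n → Type*} (k : Fin n)
    (T : (∀ i, κ i) → ℝ) : Matrix (κ k) (∀ j : {j : Fin n // j ≠ k}, κ j.1) ℝ :=
  fun a b => T fun m => if h : m = k then cast (congrArg κ h.symm) a else b ⟨m, h⟩

/-- The full multimode (Tucker) product `C ×₁ A₁ ×₂ ⋯ ×ₙ Aₙ` of a core tensor with one
matrix per mode. -/
noncomputable def tuckerProd {n : ℕ} {κ ι : Fin n → Type*} [∀ i, Fintype (κ i)]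
    (C : (∀ i, κ i) → ℝ) (A : ∀ i, Matrix (ι i) (κ i) ℝ) : (∀ i, ι i) → ℝ :=
  fun j => ∑ s : ∀ i, κ i, C s * ∏ i, A i (j i) (s i)

/-- `B` satisfies the four Penrose conditions for the real matrix `A`. -/
def IsMoorePenrose {m n : Type*} [Fintype m] [Fintype n]
    (A : Matrix m n ℝ) (B : Matrix n m ℝ) : Prop :=
  A * B * A = A ∧ B * A * B = B ∧ (A * B)ᵀ = A * B ∧ (B * A)ᵀ = B * A

/-- The Moore–Penrose pseudoinverse of a real matrix. -/
noncomputable def pinv {m n : Type*} [Fintype m] [Fintype n]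
    (A : Matrix m n ℝ) : Matrix n m ℝ :=
  by classical exact if h : ∃ B, IsMoorePenrose A B then h.choose else 0


theorem aux_exists_mp {m n : Type*} [Fintype m] [Fintype n]
    (A : Matrix m n ℝ) : ∃ B, IsMoorePenrose A B := by
  classical
  have hH : (Aᵀ * A).IsHermitian := by
    have := Matrix.isHermitian_conjTranspose_mul_self A
    simpa [Matrix.conjTranspose_eq_transpose_of_trivial] using this
  obtain ⟨G, hGt, hHG, h1, h2⟩ : ∃ G : Matrix n n ℝ, Gᵀ = G ∧ (G * (Aᵀ * A))ᵀ = G * (Aᵀ * A) ∧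
      (Aᵀ * A) * G * (Aᵀ * A) = Aᵀ * A ∧ G * (Aᵀ * A) * G = G := by
    generalize Aᵀ * A = H at hH
    have hs := hH.spectral_theorem
    rw [Unitary.conjStarAlgAut_apply] at hs
    set V : Matrix n n ℝ := (hH.eigenvectorUnitary : Matrix n n ℝ) with hV
    have hVV : star V * V = 1 := Unitary.coe_star_mul_self _
    have hst : star V = Vᵀ := by
      rw [Matrix.star_eq_conjTranspose, Matrix.conjTranspose_eq_transpose_of_trivial]
    rw [hst] at hs hVV
    set D : n → ℝ := RCLike.ofReal ∘ hH.eigenvalues with hD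
    have key : ∀ a b : n → ℝ, (V * Matrix.diagonal a * Vᵀ) * (V * Matrix.diagonal b * Vᵀ)
        = V * Matrix.diagonal (fun i => a i * b i) * Vᵀ := by
      intro a b
      calc _ = V * Matrix.diagonal a * (Vᵀ * V) * Matrix.diagonal b * Vᵀ := by
              simp only [Matrix.mul_assoc]
        _ = _ := by
              rw [hVV, Matrix.mul_one, Matrix.mul_assoc V, Matrix.diagonal_mul_diagonal]
    have keyT : ∀ a : n → ℝ, (V * Matrix.diagonal a * Vᵀ)ᵀ = V * Matrix.diagonal a * Vᵀ := by
      intro a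
      simp [Matrix.transpose_mul, Matrix.mul_assoc]
    refine ⟨V * Matrix.diagonal (fun i => (D i)⁻¹) * Vᵀ, keyT _, ?_, ?_, ?_⟩
    · rw [hs, key, keyT]
    · rw [hs, key, key]
      congr 3
      funext i
      exact mul_inv_mul_cancel _
    · rw [hs, key, key]
      have e : (fun i => (D i)⁻¹ * D i * (D i)⁻¹) = fun i => (D i)⁻¹ := by
        funext i
        simpa using mul_inv_mul_cancel (D i)⁻¹
      rw [e]
  refine ⟨G * Aᵀ, ?_, ?_, ?_, ?_⟩
  · have : Aᵀ * A * (G * (Aᵀ * A) - 1) = 0 := by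
      rw [Matrix.mul_sub, ← Matrix.mul_assoc, h1, Matrix.mul_one, sub_self]
    rw [← Matrix.conjTranspose_eq_transpose_of_trivial,
      Matrix.conjTranspose_mul_self_mul_eq_zero, Matrix.mul_sub, Matrix.mul_one, sub_eq_zero,
      Matrix.conjTranspose_eq_transpose_of_trivial] at this
    simpa only [Matrix.mul_assoc] using this
  · calc _ = (G * (Aᵀ * A) * G) * Aᵀ := by simp only [Matrix.mul_assoc]
      _ = _ := by rw [h2]
  · simp only [Matrix.transpose_mul, Matrix.transpose_transpose, hGt, Matrix.mul_assoc]
  · rw [Matrix.mul_assoc, hHG]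

theorem aux_pinv {m n : Type*} [Fintype m] [Fintype n]
    (A : Matrix m n ℝ) : A * pinv A * A = A := by
  have h := aux_exists_mp A
  unfold pinv
  rw [dif_pos h]
  exact h.choose_spec.1

theorem aux_factor {m n q : Type*} [Fintype m] [Fintype n] [Fintype q]
    (A : Matrix m n ℝ) (f : q → n) (h : (A.submatrix id f).rank = A.rank) :
    ∃ X : Matrix q n ℝ, A = A.submatrix id f * X := by
  classical
  have hle : LinearMap.range (A.submatrix id f).mulVecLin ≤ LinearMap.range A.mulVecLin := by
    rw [Matrix.range_mulVecLin, Matrix.range_mulVecLin]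
    apply Submodule.span_mono
    rintro _ ⟨x, rfl⟩
    exact ⟨f x, rfl⟩
  have heq := Submodule.eq_of_le_of_finrank_eq hle h
  have hx : ∀ j : n, ∃ x : q → ℝ, (A.submatrix id f).mulVecLin x = A.col j := by
    intro j
    have : A.col j ∈ LinearMap.range A.mulVecLin := by
      rw [Matrix.range_mulVecLin]
      exact Submodule.subset_span ⟨j, rfl⟩
    rw [← heq] at this
    exact this
  choose x hx using hx
  refine ⟨fun a j => x j a, ?_⟩
  ext a j
  exact (congrFun (hx j) a).symm

theorem aux_cur {m n p q : Type*} [Fintype m] [Fintype n] [Fintype p] [Fintype q]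
    (A : Matrix m n ℝ) (e : p → m) (f : q → n) (h : (A.submatrix e f).rank = A.rank) :
    A.submatrix id f * pinv (A.submatrix e f) * A.submatrix e id = A := by
  have h1 : (A.submatrix id f).rank ≤ A.rank := Matrix.rank_submatrix_le A id f
  have h2 : (A.submatrix e f).rank ≤ (A.submatrix id f).rank :=
    Matrix.rank_submatrix_le (A.submatrix id f) e id
  obtain ⟨X, hX⟩ := aux_factor A f (by omega)
  obtain ⟨Y, hY⟩ := aux_factor (A.submatrix id f)ᵀ e (by
    have h3 : (A.submatrix id f)ᵀ.submatrix id e = (A.submatrix e f)ᵀ := rfl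
    rw [h3, Matrix.rank_transpose, Matrix.rank_transpose]; omega)
  have hY' : A.submatrix id f = Yᵀ * A.submatrix e f := by
    have := congrArg Matrix.transpose hY
    rw [Matrix.transpose_mul, Matrix.transpose_transpose] at this
    exact this
  have hX' : A.submatrix e id = A.submatrix e f * X := by
    ext a b
    exact congrFun (congrFun hX (e a)) b
  calc _ = Yᵀ * (A.submatrix e f * pinv (A.submatrix e f) * A.submatrix e f) * X := by
        rw [hX', hY']; simp only [Matrix.mul_assoc]
    _ = A := by rw [aux_pinv, ← hY', ← hX]

theorem aux_unfold {n : ℕ} {κ : Fin n → Type*} (k : Fin n)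
    (T : (∀ i, κ i) → ℝ) (j : ∀ i, κ i) (a : κ k) :
    unfold k T a (fun m => j m.1) = T (Function.update j k a) := by
  unfold unfold
  congr 1
  funext m
  by_cases h : m = k
  · subst h; simp
  · simp [h]

theorem aux_lin {n : ℕ} {d : Fin n → ℕ} (A : (∀ i, Fin (d i)) → ℝ)
    (v : ∀ i, Fin (d i) → ℝ) (k : Fin n) (w : Fin (d k) → ℝ) :
    ∑ s, A s * ∏ i, (Function.update v k w) i (s i) =
    ∑ x, w x * ∑ s, A s * ∏ i, (Function.update v k (Pi.single x 1)) i (s i) := by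
  have hp : ∀ (w : Fin (d k) → ℝ) (s : ∀ i, Fin (d i)), ∏ i, (Function.update v k w) i (s i)
      = w (s k) * ∏ i : {i // i ≠ k}, v i.1 (s i.1) := by
    intro w s
    rw [Fintype.prod_eq_mul_prod_subtype_ne _ k]
    congr 1
    · simp
    · refine Finset.prod_congr rfl fun i _ => ?_
      simp [Function.update_of_ne i.2]
  simp only [hp, Finset.mul_sum]
  rw [Finset.sum_comm]
  refine Finset.sum_congr rfl fun s _ => ?_
  rw [Finset.sum_eq_single (s k)]
  · simp; ring
  · intro b _ hb
    simp [Ne.symm hb]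
  · simp

theorem aux_iter {n : ℕ} {d : Fin n → ℕ} (A : (∀ i, Fin (d i)) → ℝ)
    (M : ∀ i, Matrix (Fin (d i)) (Fin (d i)) ℝ)
    (hM : ∀ k j, A j = ∑ x, M k (j k) x * A (Function.update j k x)) (S : Finset (Fin n)) :
    ∀ j : ∀ i, Fin (d i), ∑ s, A s *
      ∏ i, (if i ∈ S then M i (j i) else (Pi.single (j i) 1 : Fin (d i) → ℝ)) (s i) = A j := by
  induction S using Finset.induction_on with
  | empty =>
    intro j
    rw [Finset.sum_eq_single j]
    · simp
    · intro s _ hs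
      obtain ⟨i, hi⟩ := Function.ne_iff.1 hs
      rw [Finset.prod_eq_zero (Finset.mem_univ i), mul_zero]
      simp [hi]
    · simp
  | insert k S hk ih =>
    intro j
    have hv : (fun i => (if i ∈ insert k S then M i (j i) else
        (Pi.single (j i) 1 : Fin (d i) → ℝ))) = Function.update (fun i => (if i ∈ S then M i (j i)
          else (Pi.single (j i) 1 : Fin (d i) → ℝ))) k (M k (j k)) := by
      funext i
      by_cases h : i = k
      · subst h; simp
      · simp [h]
    have := aux_lin A (fun i => (if i ∈ S then M i (j i)
          else (Pi.single (j i) 1 : Fin (d i) → ℝ))) k (M k (j k))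
    rw [← hv] at this
    refine this.trans ?_
    rw [hM k j]
    refine Finset.sum_congr rfl fun x _ => ?_
    rw [← ih (Function.update j k x)]
    congr 1
    refine Finset.sum_congr rfl fun s _ => ?_
    congr 1
    refine Finset.prod_congr rfl fun i _ => ?_
    by_cases h : i = k
    · subst h; simp [hk]
    · simp [h]

theorem aux_tucker_unfold {n : ℕ} {κ ι : Fin n → Type*} [∀ i, Fintype (κ i)]
    (R : (∀ i, κ i) → ℝ) (W : ∀ i, Matrix (ι i) (κ i) ℝ) (k : Fin n) :
    unfold k (tuckerProd R W) = W k * (unfold k R *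
      Matrix.of fun (s : ∀ j : {j : Fin n // j ≠ k}, κ j.1)
        (t : ∀ j : {j : Fin n // j ≠ k}, ι j.1) => ∏ m, W m.1 (t m) (s m)) := by
  ext a b
  simp only [Matrix.mul_apply, Matrix.of_apply, Finset.mul_sum]
  rw [← Fintype.sum_prod_type']
  simp only [unfold, tuckerProd]
  symm
  refine Fintype.sum_equiv (Equiv.piSplitAt k κ).symm _ _ ?_
  rintro ⟨x, s⟩
  have hs : (fun m => if h : m = k then cast (congrArg κ h.symm) x else s ⟨m, h⟩)
      = (Equiv.piSplitAt k κ).symm (x, s) := by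
    funext m
    by_cases h : m = k
    · subst h; simp [Equiv.piSplitAt]
    · simp [h, Equiv.piSplitAt]
  simp only [hs]
  rw [Fintype.prod_eq_mul_prod_subtype_ne _ k]
  have h1 : (Equiv.piSplitAt k κ).symm (x, s) k = x := by simp [Equiv.piSplitAt]
  have h2 : ∀ m : {m // m ≠ k}, (Equiv.piSplitAt k κ).symm (x, s) m.1 = s m := by
    intro m; simp [Equiv.piSplitAt, m.2]
  have h3 : ∀ m : {m // m ≠ k}, (if h : m.1 = k then cast (congrArg ι h.symm) a else b ⟨m.1, h⟩)
     = b m := by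
    intro m; simp [m.2]
  simp only [h1, h2, h3, dite_true, cast_eq]
  ring

/-- Characterization of the exact tensor pseudoskeleton (CUR) decomposition: for a tensor `A`
with Tucker ranks `(r₁,…,rₙ)` and sampled index sets `Iᵢ`, with `R = A[I₁,…,Iₙ]`,
`Cᵢ = (A₍ᵢ₎)[:,Jᵢ]` (`Jᵢ = ⊗_{j≠i} Iⱼ`) and `Uᵢ = (Cᵢ)[Iᵢ,:]`, the following are equivalent:
(1) `A = R ×ᵢ (Cᵢ Uᵢ†)`; (2) `rank Uᵢ = rᵢ` for all `i`;
(3) `rank Cᵢ = rᵢ` for all `i` and `R` has Tucker rank `(r₁,…,rₙ)`. -/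
theorem tensor_pseudoskeleton_characterization {n : ℕ} {d r : Fin n → ℕ}
    (A : (∀ i, Fin (d i)) → ℝ) (hrank : ∀ i, (unfold i A).rank = r i)
    (I : ∀ i, Finset (Fin (d i))) :
    let R : (∀ i, {x // x ∈ I i}) → ℝ := fun idx => A fun i => (idx i : Fin (d i))
    let C : ∀ i : Fin n, Matrix (Fin (d i)) (∀ j : {j : Fin n // j ≠ i}, {x // x ∈ I j.1}) ℝ :=
      fun i => (unfold i A).submatrix id (fun c j => (c j : Fin (d j.1)))
    let U : ∀ i : Fin n, Matrix {x // x ∈ I i} (∀ j : {j : Fin n // j ≠ i}, {x // x ∈ I j.1}) ℝ :=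
      fun i => (C i).submatrix (fun x : {x // x ∈ I i} => (x : Fin (d i))) id
    ((A = tuckerProd R fun i => C i * pinv (U i)) ↔ (∀ i, (U i).rank = r i)) ∧
    ((∀ i, (U i).rank = r i) ↔
      ((∀ i, (C i).rank = r i) ∧ ∀ i, (unfold i R).rank = r i)) := by
  intro R C U
  have hUR : ∀ i, U i = unfold i R := by
    intro i
    ext a b
    change A _ = A _
    congr 1
    funext m
    by_cases h : m = i
    · subst h; simp
    · simp [h]
  have hCle : ∀ i, (C i).rank ≤ r i := fun i =>
    hrank i ▸ Matrix.rank_submatrix_le (unfold i A) id _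
  have hUle : ∀ i, (U i).rank ≤ (C i).rank := fun i =>
    Matrix.rank_submatrix_le (C i) _ id
  refine ⟨⟨?_, ?_⟩, ?_, ?_⟩
  · intro h i
    refine le_antisymm ((hUle i).trans (hCle i)) ?_
    rw [← hrank i]
    have h' := aux_tucker_unfold R (fun i => C i * pinv (U i)) i
    rw [← h] at h'
    rw [h', hUR]
    exact (Matrix.rank_mul_le_right _ _).trans (Matrix.rank_mul_le_left _ _)
  · intro h
    have hcur : ∀ k, C k * pinv (U k) *
        (unfold k A).submatrix (fun x : {x // x ∈ I k} => (x : Fin (d k))) id = unfold k A := by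
      intro k
      have h1 : C k = (unfold k A).submatrix id
        (fun (c : ∀ j : {j : Fin n // j ≠ k}, {x // x ∈ I j.1}) j => (c j : Fin (d j.1))) := rfl
      have h2 : U k = (unfold k A).submatrix (fun x : {x // x ∈ I k} => (x : Fin (d k)))
        (fun (c : ∀ j : {j : Fin n // j ≠ k}, {x // x ∈ I j.1}) j => (c j : Fin (d j.1))) := rfl
      have h3 := (h k).trans (hrank k).symm
      rw [h2] at h3
      rw [h1, h2]
      exact aux_cur (unfold k A) _ _ h3
    generalize hW : (fun i => C i * pinv (U i)) = W
    have hcur' : ∀ k, W k *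
        (unfold k A).submatrix (fun x : {x // x ∈ I k} => (x : Fin (d k))) id = unfold k A := by
      intro k; rw [← hW]; exact hcur k
    let M : ∀ i, Matrix (Fin (d i)) (Fin (d i)) ℝ := fun i a b =>
      if hb : b ∈ I i then W i a ⟨b, hb⟩ else 0
    have hM : ∀ k j, A j = ∑ x, M k (j k) x * A (Function.update j k x) := by
      intro k j
      have e := congrFun (congrFun (hcur' k) (j k)) (fun m => j m.1)
      rw [aux_unfold, Function.update_eq_self, Matrix.mul_apply] at e
      rw [← e]
      refine Fintype.sum_of_injective (fun x : {x // x ∈ I k} => (x : Fin (d k)))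
        Subtype.val_injective _ _ ?_ ?_
      · intro x hx
        have : x ∉ I k := fun hx' => hx ⟨⟨x, hx'⟩, rfl⟩
        simp [M, this]
      · intro x
        rw [Matrix.submatrix_apply, id, aux_unfold]
        simp [M]
    funext j
    have := aux_iter A M hM Finset.univ j
    rw [← this]
    symm
    refine Fintype.sum_of_injective (fun (s : ∀ i, {x // x ∈ I i}) i => (s i : Fin (d i)))
      ?_ _ _ ?_ ?_
    · intro s t hst
      funext i
      exact Subtype.ext (congrFun hst i)
    · intro s hs
      have : ∃ i, s i ∉ I i := by
        by_contra hc
        push Not at hc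
        exact hs ⟨fun i => ⟨s i, hc i⟩, rfl⟩
      obtain ⟨i, hi⟩ := this
      rw [Finset.prod_eq_zero (Finset.mem_univ i), mul_zero]
      simp [M, hi]
    · intro s
      simp [M, R]
  · intro h
    refine ⟨fun i => le_antisymm (hCle i) (h i ▸ hUle i), fun i => ?_⟩
    rw [← hUR]; exact h i
  · rintro ⟨_, h⟩ i
    rw [hUR]; exact h i
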